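/- Let C := ∑_{n≥0} catalan(n)·X^n in the formal power series ring ℤ⟦X⟧. For every natural number k, the Fibonacci polynomial F_k, regarded as a formal power series, satisfies F_k·C^k·(1 − 2·X·C) = 1 − (X·C²)^k. -/

import Mathlib

open PowerSeries

/-- The Fibonacci polynomials: `F 0 = 0`, `F 1 = 1`, `F (k+2) = F (k+1) - X * F k`. -/
noncomputable def fibPoly : ℕ → Polynomial ℤ
  | 0 => 0
  | 1 => 1
  | (k + 2) => fibPoly (k + 1) - Polynomial.X * fibPoly k

/-- The Fibonacci polynomials regarded as formal power series over `ℤ`. -/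
noncomputable def fibPS (k : ℕ) : PowerSeries ℤ :=
  ((fibPoly k : Polynomial ℤ) : PowerSeries ℤ)

/-- The Catalan generating function `∑ catalan n • Xⁿ` over `ℤ`. -/
noncomputable def catalanGF : PowerSeries ℤ :=
  PowerSeries.mk fun n => (catalan n : ℤ)

theorem catalanGF_eq : catalanGF = 1 + PowerSeries.X * catalanGF ^ 2 := by
  have h := congrArg (PowerSeries.map (Nat.castRingHom ℤ)) PowerSeries.catalanSeries_sq_mul_X_add_one
  have e : PowerSeries.map (Nat.castRingHom ℤ) PowerSeries.catalanSeries = catalanGF := by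
    ext n
    simp [catalanGF]
  simp only [map_add, map_mul, map_pow, map_one, PowerSeries.map_X, e] at h
  linear_combination -h

theorem fibPS_add_two (k : ℕ) :
    fibPS (k + 2) = fibPS (k + 1) - PowerSeries.X * fibPS k := by
  simp [fibPS, fibPoly]

theorem fibPS_catalanGF_identity (k : ℕ) :
    fibPS k * catalanGF ^ k * (1 - 2 * PowerSeries.X * catalanGF) =
      1 - (PowerSeries.X * catalanGF ^ 2) ^ k := by
  induction k using Nat.twoStepInduction with
  | zero => simp [fibPS, fibPoly]
  | one =>
    have h1 : fibPS 1 = 1 := by simp [fibPS, fibPoly]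
    rw [h1]
    linear_combination catalanGF_eq
  | more k ih1 ih2 =>
    rw [fibPS_add_two]
    linear_combination catalanGF * ih2 - PowerSeries.X * catalanGF ^ 2 * ih1 +
      (1 - (PowerSeries.X * catalanGF ^ 2) ^ (k + 1)) * catalanGF_eq
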